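/- Let σ : A → A⁺ be a substitution such that (X_σ, T) is minimal and is not a single periodic orbit. Then the equivalence relation ∼ on A_{min,l} has exactly one equivalence class, and for every a ∈ A_{min,l}, the least eventual period p(a) of the sequence n ↦ sⁿ({a}) equals 1. -/

import Mathlib

/-! The proof rests on two facts about a minimal `X_σ` that is not a single periodic orbit.

*Some point of `X_σ` contains a long letter `c`* (`exists_long_point`). Let `a` be a minimal letter
and `σᵐ(a) = u a v`. If `u` or `v` contains a long letter, it leads back to `a`, and some `σⁿ(a)`
contains three long letters; applying `σᵏ`, the images of the middle one move arbitrarily far from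
both ends, and compactness gives a point of `X_σ` with a long letter at the origin. If `u` and `v`
are both short, one of them is nonempty because `|σⁿ(a)| → ∞`; since orbits of short letters are
eventually periodic, the words `σⁿ(a)` contain arbitrarily high powers of one nonempty word
(`powers_of_isolated`), so `X_σ` contains a periodic point and by minimality is its orbit.

*For a long letter `a` and an infinite set `S` of exponents, every letter that occurs in `X_σ` occurs
in `σⁿ(a)` for some `n ∈ S`* (`mem_of_infinite`). Indeed, the points all of whose factors occur in
the words `σⁿ(a)`, `n ∈ S`, form a nonempty closed shift-invariant subset of `X_σ`.

Consequently every long letter leads to `c`, and `c` leads to every minimal letter, so any two minimal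
letters are related. Moreover `c` is missing from only finitely many `σⁿ(a)`, hence for minimal `a`
the letter `a` itself lies in `σⁿ(a)` for all large `n`. So `F m = sᵐ({a})` satisfies
`F m ⊆ F (m + n)` for all `m` and all large `n`, which forces `F` to be eventually constant.
-/

namespace SubstMin

variable {A : Type*}

/-- Apply a map `σ : A → A⁺` to a word by concatenation. -/
def substW (σ : A → List A) (w : List A) : List A := w.flatMap σ

/-- `n`-th iterate of the substitution applied to a word. -/
def substIter (σ : A → List A) (n : ℕ) (w : List A) : List A := (substW σ)^[n] w

/-- The set `A_l` of letters `a` with `|σⁿ(a)| → ∞`. -/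
def longLetters (σ : A → List A) : Set A :=
  {a | Filter.Tendsto (fun n => (substIter σ n [a]).length) Filter.atTop Filter.atTop}

/-- The set `A_s = A \ A_l`. -/
def shortLetters (σ : A → List A) : Set A := (longLetters σ)ᶜ

/-- `σ` is a substitution: letters map to nonempty words and `A_l ≠ ∅`. -/
def IsSubstitution (σ : A → List A) : Prop :=
  (∀ a, σ a ≠ []) ∧ (longLetters σ).Nonempty

/-- The language `L(σ)`: factors of some `σⁿ(a)`, `n ≥ 1`. -/
def lang (σ : A → List A) : Set (List A) :=
  {w | ∃ (a : A) (n : ℕ), 1 ≤ n ∧ w <:+: substIter σ n [a]}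

/-- The finite factor `x[s,t]` of a bi-infinite sequence. -/
def factorOf (x : ℤ → A) (s t : ℤ) : List A :=
  (List.range (t - s + 1).toNat).map fun i => x (s + (i : ℤ))

/-- The substitution dynamical system `X_σ`. -/
def XSub (σ : A → List A) : Set (ℤ → A) :=
  {x | ∀ s t : ℤ, s ≤ t → factorOf x s t ∈ lang σ}

/-- The left shift `T`. -/
def shiftT (x : ℤ → A) : ℤ → A := fun i => x (i + 1)

/-- A subshift is minimal if it is nonempty and has no nonempty proper closed
shift-invariant subset. -/
def IsMinimalSubshift [TopologicalSpace A] (X : Set (ℤ → A)) : Prop :=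
  X.Nonempty ∧ ∀ Y : Set (ℤ → A), Y ⊆ X → Y.Nonempty → IsClosed Y →
    shiftT '' Y = Y → Y = X

/-- `a ∈ A_l` is left isolated: `σⁿ(a) = u a w` with `u ∈ A_s⁺`, `w ∈ A*`. -/
def LeftIsolated (σ : A → List A) (a : A) : Prop :=
  ∃ n : ℕ, 1 ≤ n ∧ ∃ u w : List A, u ≠ [] ∧ (∀ b ∈ u, b ∈ shortLetters σ) ∧
    substIter σ n [a] = u ++ a :: w

/-- `a ∈ A_l` is right isolated: `σᵐ(a) = w a u` with `u ∈ A_s⁺`, `w ∈ A*`. -/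
def RightIsolated (σ : A → List A) (a : A) : Prop :=
  ∃ n : ℕ, 1 ≤ n ∧ ∃ u w : List A, u ≠ [] ∧ (∀ b ∈ u, b ∈ shortLetters σ) ∧
    substIter σ n [a] = w ++ a :: u

/-- `σ` is tame: no letter of `A_l` is left or right isolated. -/
def Tame (σ : A → List A) : Prop :=
  ∀ a ∈ longLetters σ, ¬ LeftIsolated σ a ∧ ¬ RightIsolated σ a

/-- `σ` is `l`-primitive. -/
def LPrimitive (σ : A → List A) : Prop :=
  ∃ n : ℕ, 1 ≤ n ∧ ∀ a ∈ longLetters σ, ∀ b ∈ longLetters σ, a ∈ substIter σ n [b]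

/-- `a → b` : `b` occurs in `σⁿ(a)` for some `n ≥ 1`. -/
def arrow (σ : A → List A) (a b : A) : Prop :=
  ∃ n : ℕ, 1 ≤ n ∧ b ∈ substIter σ n [a]

/-- `A_{∘,l} = {a ∈ A_l | a → a}`. -/
def circLong (σ : A → List A) : Set A := {a | a ∈ longLetters σ ∧ arrow σ a a}

/-- `A_{min,l}`: letters of `A_l` minimal in `A_l`. -/
def minLong (σ : A → List A) : Set A :=
  {a | a ∈ longLetters σ ∧ ∀ b ∈ longLetters σ, arrow σ a b → arrow σ b a}

/-- `x` is a periodic point of the shift. -/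
def IsPeriodicPoint (x : ℤ → A) : Prop := ∃ p : ℕ, 1 ≤ p ∧ shiftT^[p] x = x

/-- `X` is a single periodic orbit. -/
def IsSinglePeriodicOrbit (X : Set (ℤ → A)) : Prop :=
  ∃ x : ℤ → A, IsPeriodicPoint x ∧ X = Set.range fun i : ℤ => fun j => x (j + i)

/-- `y = σ(x)` : `y` is obtained from `x` by applying `σ` to each coordinate and
concatenating, with `σ(x(0))` placed starting at coordinate `0`. -/
def IsSubstImage (σ : A → List A) (x y : ℤ → A) : Prop :=
  ∃ o : ℤ → ℤ, o 0 = 0 ∧ (∀ i : ℤ, o (i + 1) = o i + (σ (x i)).length) ∧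
    ∀ i : ℤ, factorOf y (o i) (o (i + 1) - 1) = σ (x i)

/-- The map `s` on nonempty subsets of `A_l`: `s(F) = ⋃_{a ∈ F} (Lett(σ(a)) ∩ A_l)`. -/
def sMap (σ : A → List A) (F : Set A) : Set A :=
  {b | b ∈ longLetters σ ∧ ∃ a ∈ F, b ∈ σ a}

end SubstMin

namespace SubstMin

variable {A : Type*}

/-! ### Iterates of a substitution -/

section Words

variable {σ : A → List A}

lemma substIter_zero (w : List A) : substIter σ 0 w = w := rfl

lemma substIter_one_singleton (a : A) : substIter σ 1 [a] = σ a := by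
  simp [substIter, substW]

lemma substIter_add (m n : ℕ) (w : List A) :
    substIter σ (m + n) w = substIter σ m (substIter σ n w) :=
  Function.iterate_add_apply _ m n w

lemma substIter_nil (n : ℕ) : substIter σ n [] = [] := by
  induction n with
  | zero => rfl
  | succ n ih => rw [substIter_add n 1, show substIter σ 1 [] = [] from rfl, ih]

lemma substIter_append (n : ℕ) (u v : List A) :
    substIter σ n (u ++ v) = substIter σ n u ++ substIter σ n v := by
  induction n generalizing u v with
  | zero => rfl
  | succ n ih => 
    simp only [substIter_add n 1]
    rw [← ih]
    simp [substIter, substW, List.flatMap_append]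

lemma substIter_cons (n : ℕ) (a : A) (v : List A) :
    substIter σ n (a :: v) = substIter σ n [a] ++ substIter σ n v :=
  substIter_append n [a] v

lemma mem_substIter {n : ℕ} {w : List A} {c : A} :
    c ∈ substIter σ n w ↔ ∃ b ∈ w, c ∈ substIter σ n [b] := by
  induction w with
  | nil => simp [substIter_nil]
  | cons a w ih => rw [substIter_cons, List.mem_append, ih]; simp

lemma mem_substIter_add {m n : ℕ} {a b c : A} (hb : b ∈ substIter σ n [a])
    (hc : c ∈ substIter σ m [b]) : c ∈ substIter σ (m + n) [a] := by
  rw [substIter_add]; exact mem_substIter.2 ⟨b, hb, hc⟩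

lemma sublist_substIter {u v : List A} (h : u.Sublist v) (n : ℕ) :
    (substIter σ n u).Sublist (substIter σ n v) := by
  induction n generalizing u v with
  | zero => exact h
  | succ n ih => 
    simp only [substIter_add n 1]
    exact ih (List.Sublist.flatMap h σ)

lemma length_le_substIter (hσ : ∀ a, σ a ≠ []) (n : ℕ) (w : List A) :
    w.length ≤ (substIter σ n w).length := by
  induction n generalizing w with
  | zero => exact le_rfl
  | succ n ih =>
    rw [substIter_add n 1]
    refine le_trans ?_ (ih _)
    induction w with
    | nil => simp
    | cons a w ihw =>
      have := List.length_pos_iff.2 (hσ a)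
      rw [substIter_cons, substIter_one_singleton, List.length_append, List.length_cons]
      omega

lemma length_substIter_mono (hσ : ∀ a, σ a ≠ []) (w : List A) :
    Monotone fun n => (substIter σ n w).length := by
  intro m n h
  obtain ⟨k, rfl⟩ := Nat.exists_eq_add_of_le' h
  simpa only [substIter_add] using length_le_substIter hσ k _

lemma length_ge_of_mem {n : ℕ} {w : List A} {b : A} (h : b ∈ w) :
    (substIter σ n [b]).length ≤ (substIter σ n w).length :=
  (sublist_substIter (List.singleton_sublist.2 h) n).length_le

lemma short_bounded (hσ : ∀ a, σ a ≠ []) {a : A} (ha : a ∉ longLetters σ) :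
    ∃ B, ∀ n, (substIter σ n [a]).length ≤ B := by
  by_contra! h
  exact ha (Filter.tendsto_atTop_atTop_of_monotone (length_substIter_mono hσ [a])
    fun b => (h b).imp fun _ hn => hn.le)

lemma long_iff (hσ : ∀ a, σ a ≠ []) {a : A} :
    a ∈ longLetters σ ↔ ∀ B, ∃ n, B ≤ (substIter σ n [a]).length :=
  ⟨fun h B => (h.eventually_ge_atTop B).exists, fun h =>
    Filter.tendsto_atTop_atTop_of_monotone (length_substIter_mono hσ [a]) h⟩

lemma long_of_mem (hσ : ∀ a, σ a ≠ []) {a b : A} {n : ℕ} (h : b ∈ substIter σ n [a])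
    (hb : b ∈ longLetters σ) : a ∈ longLetters σ := by
  rw [long_iff hσ] at hb ⊢
  intro B
  obtain ⟨k, hk⟩ := hb B
  exact ⟨k + n, by rw [substIter_add]; exact hk.trans (length_ge_of_mem h)⟩

/-- The images of a word without long letters stay bounded. -/
lemma word_bounded (hσ : ∀ a, σ a ≠ []) {w : List A} (hw : ∀ b ∈ w, b ∉ longLetters σ) :
    ∃ B, ∀ n, (substIter σ n w).length ≤ B := by
  induction w with
  | nil => exact ⟨0, fun n => by simp [substIter_nil]⟩
  | cons a w ih =>
    obtain ⟨B, hB⟩ := ih fun b hb => hw b (List.mem_cons_of_mem _ hb)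
    obtain ⟨C, hC⟩ := short_bounded hσ (hw a List.mem_cons_self)
    exact ⟨C + B, fun n => by
      rw [substIter_cons, List.length_append]; exact add_le_add (hC n) (hB n)⟩

lemma exists_long (hσ : ∀ a, σ a ≠ []) {a : A} (ha : a ∈ longLetters σ) (n : ℕ) :
    ∃ b ∈ substIter σ n [a], b ∈ longLetters σ := by
  by_contra! h
  obtain ⟨B, hB⟩ := word_bounded hσ h
  obtain ⟨k, hk⟩ := (long_iff hσ).1 ha (B + 1)
  have h1 := hB k
  rw [← substIter_add, add_comm] at h1
  have h2 : (substIter σ k [a]).length ≤ (substIter σ (n + k) [a]).length :=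
    length_substIter_mono hσ [a] (Nat.le_add_left k n)
  rw [add_comm n k, add_comm k n] at h1
  omega

lemma arrow_trans {a b c : A} (h : arrow σ a b) (h' : arrow σ b c) : arrow σ a c := by
  obtain ⟨n, hn, hb⟩ := h
  obtain ⟨m, _, hc⟩ := h'
  exact ⟨m + n, by omega, mem_substIter_add hb hc⟩

/-- A long letter whose set of long successors has least cardinality leads to a minimal letter. -/
lemma minLong_nonempty [Finite A] (hσ : ∀ a, σ a ≠ []) (hl : (longLetters σ).Nonempty) :
    (minLong σ).Nonempty := by
  classical
  let R : A → Set A := fun a => {b | b ∈ longLetters σ ∧ arrow σ a b}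
  obtain ⟨a, ha, hmin⟩ := Set.exists_min_image (longLetters σ) (fun a => (R a).ncard)
    (Set.toFinite _) hl
  have key : ∀ b ∈ R a, R b = R a := fun b hb =>
    Set.eq_of_subset_of_ncard_le (fun c hc => ⟨hc.1, arrow_trans hb.2 hc.2⟩) (hmin b hb.1)
      (Set.toFinite _)
  obtain ⟨b, hb, hbl⟩ := exists_long hσ ha 1
  have hbR : b ∈ R a := ⟨hbl, 1, le_rfl, hb⟩
  refine ⟨b, hbl, fun c hc hbc => ?_⟩
  have hcR : c ∈ R a := by rw [← key b hbR]; exact ⟨hc, hbc⟩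
  have : b ∈ R c := by rw [key c hcR]; exact hbR
  exact this.2

/-- A minimal letter reappears in its own images: it leads to some long letter, which leads
back by minimality. -/
lemma minLong_arrow_self (hσ : ∀ a, σ a ≠ []) {a : A} (ha : a ∈ minLong σ) : arrow σ a a := by
  obtain ⟨b, hb, hbl⟩ := exists_long hσ ha.1 1
  have h : arrow σ a b := ⟨1, le_rfl, hb⟩
  exact arrow_trans h (ha.2 b hbl h)

lemma sMap_iterate (hσ : ∀ a, σ a ≠ []) {a : A} (ha : a ∈ longLetters σ) (n : ℕ) :
    (sMap σ)^[n] {a} = {b | b ∈ longLetters σ ∧ b ∈ substIter σ n [a]} := by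
  induction n with
  | zero =>
    ext b
    simp only [Function.iterate_zero, id, Set.mem_singleton_iff, substIter_zero,
      List.mem_singleton, Set.mem_ofPred_eq]
    exact ⟨fun h => ⟨h ▸ ha, h⟩, fun h => h.2⟩
  | succ n ih =>
    rw [Function.iterate_succ_apply', ih]
    ext b
    simp only [sMap, Set.mem_ofPred_eq]
    rw [add_comm, substIter_add, mem_substIter]
    simp only [substIter_one_singleton]
    constructor
    · rintro ⟨hb, c, ⟨_, hc⟩, hbc⟩
      exact ⟨hb, c, hc, hbc⟩
    · rintro ⟨hb, c, hc, hbc⟩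
      exact ⟨hb, c, ⟨long_of_mem hσ (n := 1) (by rwa [substIter_one_singleton]) hb, hc⟩, hbc⟩

end Words

/-! ### Subshifts defined by a language, and compactness -/

section Subshift

/-- The set of bi-infinite sequences all of whose nonempty finite factors belong to `P`.
For `P = lang σ` this is `XSub σ` by definition. -/
def langShift (P : Set (List A)) : Set (ℤ → A) :=
  {x | ∀ s t : ℤ, s ≤ t → factorOf x s t ∈ P}

/-- A word that agrees letter by letter with `w` from position `d` on is a factor of `w`. -/
lemma map_range_infix (w : List A) (d n : ℕ) (f : ℕ → A)
    (h : ∀ j < n, w[d + j]? = some (f j)) : (List.range n).map f <:+: w := by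
  have : (List.range n).map f = (w.drop d).take n := by
    apply List.ext_getElem?
    intro j
    rw [List.getElem?_take]
    split_ifs with hj
    · simp [List.getElem?_drop, h j hj, hj]
    · simp [hj]
  rw [this]
  exact (List.take_prefix _ _).isInfix.trans (List.drop_suffix _ _).isInfix

/-- `factorOf` coerces the whole index list to `ℤ`; this is the same word indexed by `ℕ`. -/
lemma factorOf_eq (x : ℤ → A) (s t : ℤ) :
    factorOf x s t = (List.range (t - s + 1).toNat).map fun j : ℕ => x (s + (j : ℤ)) := by
  simp [factorOf, ← List.map_eq_flatMap, Function.comp_def]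

lemma shiftT_iterate (n : ℕ) (x : ℤ → A) : shiftT^[n] x = fun i => x (i + n) := by
  induction n with
  | zero => simp
  | succ n ih =>
    rw [Function.iterate_succ_apply', ih]
    funext i
    simp only [shiftT]
    push_cast
    exact congrArg x (by ring)

lemma factorOf_translate (x : ℤ → A) (k s t : ℤ) :
    factorOf (fun i => x (i + k)) s t = factorOf x (s + k) (t + k) := by
  rw [factorOf_eq, factorOf_eq, show t + k - (s + k) + 1 = t - s + 1 by ring]
  refine List.map_congr_left fun i _ => ?_
  exact congrArg x (by ring)

lemma translate_mem_langShift {P : Set (List A)} {x : ℤ → A} (hx : x ∈ langShift P) (k : ℤ) :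
    (fun i => x (i + k)) ∈ langShift P := fun s t h => by
  rw [factorOf_translate]; exact hx _ _ (by omega)

lemma shiftT_image_langShift (P : Set (List A)) : shiftT '' langShift P = langShift P := by
  ext x
  constructor
  · rintro ⟨y, hy, rfl⟩
    exact translate_mem_langShift hy 1
  · intro hx
    exact ⟨_, translate_mem_langShift hx (-1), funext fun i => by simp [shiftT]⟩

lemma mem_of_mem_langShift {P : Set (List A)} {x : ℤ → A} (hx : x ∈ langShift P) (i : ℤ) :
    ∃ w ∈ P, x i ∈ w :=
  ⟨_, hx i i le_rfl, by simp [factorOf_eq]⟩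

variable [TopologicalSpace A] [DiscreteTopology A]

lemma isClosed_langShift (P : Set (List A)) : IsClosed (langShift P) := by
  have : langShift P = ⋂ (s : ℤ) (t : ℤ) (_ : s ≤ t), {x | factorOf x s t ∈ P} := by
    ext x; simp [langShift]
  rw [this]
  refine isClosed_iInter fun s => isClosed_iInter fun t => isClosed_iInter fun _ => ?_
  -- Membership depends on finitely many coordinates only.
  let g : (ℤ → A) → (Fin (t - s + 1).toNat → A) := fun x i => x (s + (i : ℕ))
  have hg : Continuous g := by fun_prop
  have h2 : {x | factorOf x s t ∈ P} = g ⁻¹' {f | List.ofFn f ∈ P} := by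
    ext x
    have : factorOf x s t = List.ofFn (g x) := by
      apply List.ext_getElem
      · simp [factorOf_eq]
      · intro n h1 h2; simp [factorOf_eq, g]
    simp [this]
  rw [h2]
  exact (isClosed_discrete _).preimage hg

/-- A factorial language containing words with a marked letter arbitrarily far from both ends
has a bi-infinite limit point carrying a marked letter at the origin. -/
lemma exists_limit_point [Finite A] {P : Set (List A)} (hP : ∀ w ∈ P, ∀ v, v <:+: w → v ∈ P)
    (C : Set A)
    (h : ∀ N : ℕ, ∃ u c v, u ++ c :: v ∈ P ∧ c ∈ C ∧ N ≤ u.length ∧ N ≤ v.length) :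
    ∃ x ∈ langShift P, x 0 ∈ C := by
  have hy : ∀ N : ℕ, ∃ y : ℤ → A, y 0 ∈ C ∧
      ∀ s t : ℤ, -(N : ℤ) ≤ s → t ≤ N → factorOf y s t ∈ P := by
    intro N
    obtain ⟨u, c, v, hw, hc, hu, hv⟩ := h N
    refine ⟨fun i => (u ++ c :: v).getD (i + u.length).toNat c, by simpa using hc, ?_⟩
    intro s t hs ht
    rw [factorOf_eq]
    refine hP _ hw _ (map_range_infix _ (s + u.length).toNat _ _ fun j hj => ?_)
    have e : (s + (j : ℤ) + u.length).toNat = (s + u.length).toNat + j := by omega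
    rw [e]
    have hlt : (s + u.length).toNat + j < (u ++ c :: v).length := by
      simp only [List.length_append, List.length_cons]; omega
    simp only [List.getD_eq_getElem?_getD, List.getElem?_eq_getElem hlt, Option.getD_some]
  choose y hyC hyP using hy
  obtain ⟨x, φ, hφ, hx⟩ := CompactSpace.tendsto_subseq y
  have hev : ∀ i : ℤ, ∀ᶠ n in Filter.atTop, y (φ n) i = x i := fun i => by
    have := (tendsto_pi_nhds.1 hx) i
    rw [nhds_discrete, Filter.tendsto_pure] at this
    exact this
  refine ⟨x, fun s t _ => ?_, ?_⟩
  · have h1 : ∀ᶠ n in Filter.atTop, ∀ i ∈ Set.Icc s t, y (φ n) i = x i :=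
      (Filter.eventually_all_finite (Set.finite_Icc s t)).2 fun i _ => hev i
    obtain ⟨n, hn1, hn2⟩ := (h1.and (Filter.eventually_ge_atTop (s.natAbs + t.natAbs))).exists
    have hn3 := hφ.id_le n
    simp only [id] at hn3
    have : factorOf x s t = factorOf (y (φ n)) s t := by
      rw [factorOf_eq, factorOf_eq]
      refine List.map_congr_left fun i hi => (hn1 _ ?_).symm
      rw [List.mem_range] at hi
      exact ⟨by omega, by omega⟩
    rw [this]
    exact hyP _ _ _ (by omega) (by omega)
  · obtain ⟨n, hn⟩ := (hev 0).exists
    rw [← hn]; exact hyC _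

/-- A minimal subshift whose language contains all powers of a nonempty word is the orbit of
the bi-infinite repetition of that word. -/
lemma periodic_of_powers {P : Set (List A)} (hP : ∀ w ∈ P, ∀ v, v <:+: w → v ∈ P)
    (hmin : IsMinimalSubshift (langShift P)) {W : List A} (hW : W ≠ [])
    (h : ∀ k, (List.replicate k W).flatten ∈ P) : IsSinglePeriodicOrbit (langShift P) := by
  have hL : 0 < W.length := List.length_pos_iff.2 hW
  have hpow : ∀ k i, i < k * W.length →
      (List.replicate k W).flatten[i]? = W[i % W.length]? := by
    intro k
    induction k with
    | zero => intro i hi; omega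
    | succ k ih =>
      intro i hi
      rw [List.replicate_succ, List.flatten_cons, List.getElem?_append]
      split_ifs with hlt
      · rw [Nat.mod_eq_of_lt hlt]
      · rw [ih _ (by rw [Nat.succ_mul] at hi; omega), ← Nat.mod_eq_sub_mod (by omega)]
  have hLz : (0 : ℤ) < W.length := by exact_mod_cast hL
  have hidx : ∀ i : ℤ, (i % W.length).toNat < W.length := fun i => by
    have := Int.emod_lt_of_pos i hLz
    have := Int.emod_nonneg i hLz.ne'
    omega
  let x : ℤ → A := fun i => W[(i % W.length).toNat]'(hidx i)
  have hxmod : ∀ i j : ℤ, i % W.length = j % W.length → x i = x j := fun i j hij => by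
    simp only [x, hij]
  have hx : x ∈ langShift P := by
    intro s t _
    have hs0 := Int.emod_nonneg s hLz.ne'
    have hs1 := Int.emod_lt_of_pos s hLz
    set d := (s % W.length).toNat with hd
    rw [factorOf_eq]
    refine hP _ (h (d + (t - s + 1).toNat)) _ (map_range_infix _ d _ _ fun j hj => ?_)
    rw [hpow _ _ (lt_of_lt_of_le (Nat.add_lt_add_left hj d) (Nat.le_mul_of_pos_right _ hL)),
      List.getElem?_eq_getElem (Nat.mod_lt _ hL)]
    congr 1
    simp only [x]
    congr 1
    have : ((d + j : ℕ) : ℤ) % W.length = (s + j) % W.length := by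
      push_cast
      rw [hd, Int.toNat_of_nonneg hs0, Int.emod_add_emod]
    rw [← this, ← Int.natCast_mod, Int.toNat_natCast]
  refine ⟨x, ⟨W.length, hL, ?_⟩, ?_⟩
  · rw [shiftT_iterate]
    exact funext fun i => hxmod _ _ (by simp)
  · refine (hmin.2 _ ?_ (Set.range_nonempty _) ?_ ?_).symm
    · rintro _ ⟨k, rfl⟩
      exact translate_mem_langShift hx k
    · -- The orbit is finite, since the translate by `i` depends on `i` modulo `|W|` only.
      refine (((Set.finite_Ico (0 : ℤ) W.length).image
        fun i : ℤ => fun j => x (j + i)).subset ?_).isClosed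
      rintro _ ⟨i, rfl⟩
      refine ⟨i % W.length, ⟨Int.emod_nonneg i hLz.ne', Int.emod_lt_of_pos i hLz⟩, ?_⟩
      exact funext fun j => hxmod _ _ (by simp)
    · ext y
      constructor
      · rintro ⟨_, ⟨i, rfl⟩, rfl⟩
        exact ⟨i + 1, funext fun j => by simp only [shiftT]; congr 1; ring⟩
      · rintro ⟨i, rfl⟩
        exact ⟨_, ⟨i - 1, rfl⟩, funext fun j => by simp only [shiftT]; congr 1; ring⟩

end Subshift

/-! ### Isolated letters produce periodic points -/

section Isolated

variable {σ : A → List A}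

lemma lang_factorial : ∀ w ∈ lang σ, ∀ v, v <:+: w → v ∈ lang σ := by
  rintro w ⟨a, n, hn, hw⟩ v hv
  exact ⟨a, n, hn, hv.trans hw⟩

/-- Orbits of short letters are bounded, so some power `σ^q`, with `q` a multiple of any
prescribed `m`, acts on short words as an idempotent. -/
lemma exists_idempotent_power [Finite A] (hσ : ∀ a, σ a ≠ []) (m : ℕ) :
    ∃ q', 1 ≤ q' ∧ ∀ w : List A, (∀ b ∈ w, b ∉ longLetters σ) →
      substIter σ (m * q') (substIter σ (m * q') w) = substIter σ (m * q') w := by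
  classical
  have hB : ∀ b : A, ∃ B, b ∉ longLetters σ → ∀ n, (substIter σ n [b]).length ≤ B := fun b => by
    by_cases hb : b ∈ longLetters σ
    · exact ⟨0, fun h => absurd hb h⟩
    · exact (short_bounded hσ hb).imp fun _ h _ => h
  choose B hB using hB
  let f : ℕ → A → List A := fun n b => if b ∈ longLetters σ then [] else substIter σ (m * n) [b]
  have hfin : (Set.range f).Finite := by
    refine (Set.Finite.pi' fun b => List.finite_length_le A (B b)).subset ?_
    rintro _ ⟨n, rfl⟩ b
    simp only [f]
    split_ifs with hb
    · simp
    · exact hB b hb _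
  obtain ⟨i, j, hij, he⟩ : ∃ i j, i < j ∧ f i = f j := by
    have : ¬ Function.Injective f := fun hf => Set.infinite_range_of_injective hf hfin
    rw [Function.Injective] at this
    push Not at this
    obtain ⟨i, j, he, hne⟩ := this
    rcases lt_or_gt_of_ne hne with h | h
    · exact ⟨i, j, h, he⟩
    · exact ⟨j, i, h, he.symm⟩
  obtain ⟨p, rfl⟩ := Nat.exists_eq_add_of_lt hij
  have hstep : ∀ b, b ∉ longLetters σ → ∀ n, i ≤ n →
      substIter σ (m * (n + (p + 1))) [b] = substIter σ (m * n) [b] := by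
    intro b hb n hn
    obtain ⟨k, rfl⟩ := Nat.exists_eq_add_of_le' hn
    have := congrFun he b
    simp only [f, if_neg hb] at this
    rw [show m * (k + i + (p + 1)) = m * k + m * (i + p + 1) by ring, substIter_add, ← this,
      ← substIter_add, mul_add]
  have hiter : ∀ b, b ∉ longLetters σ → ∀ r n, i ≤ n →
      substIter σ (m * (n + r * (p + 1))) [b] = substIter σ (m * n) [b] := by
    intro b hb r
    induction r with
    | zero => intro n _; simp
    | succ r ih =>
      intro n hn
      rw [show n + (r + 1) * (p + 1) = (n + r * (p + 1)) + (p + 1) by ring,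
        hstep b hb _ (by omega), ih n hn]
  refine ⟨(i + 1) * (p + 1), Nat.mul_pos (by omega) (by omega), fun w hw => ?_⟩
  induction w with
  | nil => simp [substIter_nil]
  | cons b w ih =>
    rw [substIter_cons, substIter_append, ih fun c hc => hw c (List.mem_cons_of_mem _ hc),
      ← substIter_add, ← mul_add, hiter b (hw b List.mem_cons_self)]
    nlinarith

lemma short_substIter (hσ : ∀ a, σ a ≠ []) {w : List A} (hw : ∀ b ∈ w, b ∉ longLetters σ)
    (n : ℕ) : ∀ b ∈ substIter σ n w, b ∉ longLetters σ := by
  intro b hb hbl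
  obtain ⟨c, hc, hbc⟩ := mem_substIter.1 hb
  exact hw c hc (long_of_mem hσ hbc hbl)

/-- If `σᵐ(a) = u a v` with `u` and `v` short and not both empty, all powers of some nonempty
word occur in the language: once `σ^q` is idempotent on short words and `σ^q(a) = U a V`, the
word `σ^{(k+1)q}(a)` begins with `σ^q(U)ᵏ` and ends with `σ^q(V)ᵏ`. -/
lemma powers_of_isolated [Finite A] (hσ : ∀ a, σ a ≠ []) {a : A} {m : ℕ} (hm : 1 ≤ m)
    {u v : List A} (huv : u ≠ [] ∨ v ≠ []) (hus : ∀ b ∈ u, b ∉ longLetters σ)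
    (hvs : ∀ b ∈ v, b ∉ longLetters σ) (h : substIter σ m [a] = u ++ a :: v) :
    ∃ W : List A, W ≠ [] ∧ ∀ k, (List.replicate k W).flatten ∈ lang σ := by
  obtain ⟨q', hq', hid⟩ := exists_idempotent_power (σ := σ) hσ m
  obtain ⟨U, V, hUV0, hUs, hVs, hUV⟩ : ∃ U V : List A, (U ≠ [] ∨ V ≠ []) ∧
      (∀ b ∈ U, b ∉ longLetters σ) ∧ (∀ b ∈ V, b ∉ longLetters σ) ∧
      substIter σ (m * q') [a] = U ++ a :: V := by
    clear hid
    induction q', hq' using Nat.le_induction with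
    | base => exact ⟨u, v, huv, hus, hvs, by rw [mul_one, h]⟩
    | succ r _ ih =>
      obtain ⟨U, V, _, hUs, hVs, hUV⟩ := ih
      refine ⟨substIter σ m U ++ u, v ++ substIter σ m V, ?_, ?_, ?_, ?_⟩
      · rcases huv with h | h
        · left; simp [h]
        · right; simp [h]
      · intro b hb
        rcases List.mem_append.1 hb with hb | hb
        · exact short_substIter hσ hUs m b hb
        · exact hus b hb
      · intro b hb
        rcases List.mem_append.1 hb with hb | hb
        · exact hvs b hb
        · exact short_substIter hσ hVs m b hb
      · rw [mul_add, mul_one, add_comm, substIter_add, hUV, substIter_append, substIter_cons, h]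
        simp
  have hq : 1 ≤ m * q' := Nat.mul_pos hm hq'
  set q := m * q'
  have hne : ∀ w : List A, w ≠ [] → substIter σ q w ≠ [] := fun w hw h0 => by
    have h1 := length_le_substIter hσ q w
    rw [h0] at h1
    exact hw (List.length_eq_zero_iff.1 (Nat.le_zero.1 h1))
  have hrep : ∀ w : List A, (∀ b ∈ w, b ∉ longLetters σ) → ∀ k,
      substIter σ q (List.replicate k (substIter σ q w)).flatten =
        (List.replicate k (substIter σ q w)).flatten := by
    intro w hw k
    induction k with
    | zero => simp [substIter_nil]
    | succ k ih => rw [List.replicate_succ, List.flatten_cons, substIter_append, ih, hid w hw]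
  have hform : ∀ k, substIter σ (q * (k + 1)) [a] =
      (List.replicate k (substIter σ q U)).flatten ++ (U ++ a :: V) ++
        (List.replicate k (substIter σ q V)).flatten := by
    intro k
    induction k with
    | zero => simp [hUV]
    | succ k ih =>
      rw [mul_add q (k + 1), mul_one, add_comm, substIter_add, ih]
      simp only [substIter_append, hrep U hUs, hrep V hVs]
      rw [substIter_cons, hUV, List.replicate_succ' (n := k) (a := substIter σ q U),
        List.replicate_succ (n := k) (a := substIter σ q V)]
      simp
  rcases hUV0 with h0 | h0
  · refine ⟨_, hne U h0, fun k => ⟨a, q * (k + 1), Nat.mul_pos hq (by omega), ?_⟩⟩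
    rw [hform k, List.append_assoc]
    exact (List.prefix_append _ _).isInfix
  · refine ⟨_, hne V h0, fun k => ⟨a, q * (k + 1), Nat.mul_pos hq (by omega), ?_⟩⟩
    rw [hform k]
    exact (List.suffix_append _ _).isInfix

end Isolated

/-! ### Long letters in the subshift -/

section Main

variable {σ : A → List A} [Finite A] [TopologicalSpace A] [DiscreteTopology A]

/-- If some `σⁿ(a)` contains three long letters, then some point of `X_σ` contains a long letter:
the images of the middle one are pushed arbitrarily far from both ends by the outer two. -/
lemma exists_long_of_three (hσ : ∀ a, σ a ≠ []) {a b c d : A} {n : ℕ}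
    (hb : b ∈ longLetters σ) (hc : c ∈ longLetters σ) (hd : d ∈ longLetters σ)
    (h : [b, c, d].Sublist (substIter σ n [a])) :
    ∃ x ∈ XSub σ, x 0 ∈ longLetters σ := by
  refine exists_limit_point lang_factorial (longLetters σ) fun N => ?_
  have h' : ([b] ++ ([c] ++ [d])).Sublist (substIter σ n [a]) := h
  obtain ⟨p, r, e, hp, hr⟩ := List.append_sublist_iff.1 h'
  obtain ⟨q, s, rfl, hq, hs⟩ := List.append_sublist_iff.1 hr
  obtain ⟨k, hk, hkb, hkd⟩ := ((Filter.eventually_ge_atTop 1).and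
    ((hb.eventually_ge_atTop N).and (hd.eventually_ge_atTop N))).exists
  obtain ⟨e', he', hel⟩ := exists_long hσ hc k
  have hemem : e' ∈ substIter σ k q := mem_substIter.2 ⟨c, List.singleton_sublist.1 hq, he'⟩
  obtain ⟨l₁, l₂, hl⟩ := List.append_of_mem hemem
  refine ⟨substIter σ k p ++ l₁, e', l₂ ++ substIter σ k s, ?_, hel, ?_, ?_⟩
  · refine ⟨a, k + n, by omega, ?_⟩
    rw [substIter_add, e, substIter_append, substIter_append, hl]
    simp
  · have := (sublist_substIter (σ := σ) hp k).length_le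
    rw [List.length_append]; omega
  · have := (sublist_substIter (σ := σ) hs k).length_le
    rw [List.length_append]; omega

/-- A minimal letter either has three long letters in one of its images, or reappears in some
image surrounded by short letters only, which makes a minimal `X_σ` a periodic orbit. -/
lemma exists_long_point (hσ : IsSubstitution σ) (hmin : IsMinimalSubshift (XSub σ))
    (hnp : ¬ IsSinglePeriodicOrbit (XSub σ)) : ∃ x ∈ XSub σ, x 0 ∈ longLetters σ := by
  obtain ⟨a, ha⟩ := minLong_nonempty hσ.1 hσ.2
  obtain ⟨m, hm, hma⟩ := minLong_arrow_self hσ.1 ha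
  obtain ⟨u, v, huv⟩ := List.append_of_mem hma
  have single : ∀ {c : A} {w : List A}, c ∈ w → [c].Sublist w := List.singleton_sublist.2
  by_cases hu : ∃ b ∈ u, b ∈ longLetters σ
  · obtain ⟨b, hb, hbl⟩ := hu
    obtain ⟨k, -, hk⟩ := ha.2 b hbl ⟨m, hm, by rw [huv]; simp [hb]⟩
    obtain ⟨e, he, hel⟩ := exists_long hσ.1 ha.1 k
    obtain ⟨f, hf, hfl⟩ := exists_long hσ.1 hel m
    -- `b a` in `σᵐ(a)` gives `a e` in `σ^{k+m}(a)`, hence `b a f` in `σ^{m+k+m}(a)`.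
    have h1 : ([b] ++ [a]).Sublist (substIter σ m [a]) := by
      rw [huv]; exact (single hb).append (single (by simp))
    have h2 : ([a] ++ [e]).Sublist (substIter σ (k + m) [a]) := by
      rw [substIter_add]
      refine List.Sublist.trans ?_ (sublist_substIter h1 k)
      rw [substIter_append]
      exact (single hk).append (single he)
    refine exists_long_of_three hσ.1 (n := m + (k + m)) (a := a) hbl ha.1 hfl ?_
    rw [substIter_add]
    refine List.Sublist.trans ?_ (sublist_substIter h2 m)
    rw [substIter_append]
    exact h1.append (single hf)
  by_cases hv : ∃ b ∈ v, b ∈ longLetters σ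
  · obtain ⟨b, hb, hbl⟩ := hv
    obtain ⟨k, -, hk⟩ := ha.2 b hbl ⟨m, hm, by rw [huv]; simp [hb]⟩
    obtain ⟨e, he, hel⟩ := exists_long hσ.1 ha.1 k
    obtain ⟨f, hf, hfl⟩ := exists_long hσ.1 hel m
    -- The mirror image of the previous case: `f a b` occurs in `σ^{m+k+m}(a)`.
    have h1 : ([a] ++ [b]).Sublist (substIter σ m [a]) := by
      rw [huv, List.append_cons u a v]
      exact (single (by simp)).append (single hb)
    have h2 : ([e] ++ [a]).Sublist (substIter σ (k + m) [a]) := by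
      rw [substIter_add]
      refine List.Sublist.trans ?_ (sublist_substIter h1 k)
      rw [substIter_append]
      exact (single he).append (single hk)
    refine exists_long_of_three hσ.1 (n := m + (k + m)) (a := a) hfl ha.1 hbl ?_
    rw [substIter_add]
    refine List.Sublist.trans ?_ (sublist_substIter h2 m)
    rw [substIter_append]
    exact (single hf).append h1
  push Not at hu hv
  refine absurd ?_ hnp
  have hne : u ≠ [] ∨ v ≠ [] := by
    by_contra! h0
    obtain ⟨rfl, rfl⟩ := h0
    -- Otherwise `σᵐ(a) = a`, contradicting the growth of `a`.
    have hfix : ∀ k, substIter σ (k * m) [a] = [a] := by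
      intro k
      induction k with
      | zero => simp [substIter_zero]
      | succ k ih => rw [Nat.succ_mul, substIter_add, huv]; exact ih
    obtain ⟨n, hn⟩ := (long_iff hσ.1).1 ha.1 2
    have h1 : (substIter σ n [a]).length ≤ (substIter σ (n * m) [a]).length :=
      length_substIter_mono hσ.1 [a] (Nat.le_mul_of_pos_right n hm)
    rw [hfix] at h1
    simp only [List.length_singleton] at h1
    omega
  obtain ⟨W, hW, hpow⟩ := powers_of_isolated hσ.1 hm hne hu hv huv
  exact periodic_of_powers lang_factorial hmin hW hpow

/-- The points all of whose factors occur in the words `σⁿ(a)`, `n ∈ S`, form a nonempty closed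
shift-invariant subset, hence all, of a minimal `X_σ`; so every letter occurring at the origin of
a point of `X_σ` occurs in `σⁿ(a)` for some `n ∈ S`. -/
lemma mem_of_infinite (hmin : IsMinimalSubshift (XSub σ)) {x : ℤ → A}
    (hx : x ∈ XSub σ) {a : A} (ha : a ∈ longLetters σ) {S : Set ℕ} (hS : S.Infinite)
    (hS1 : ∀ n ∈ S, 1 ≤ n) : ∃ n ∈ S, x 0 ∈ substIter σ n [a] := by
  let P : Set (List A) := {w | ∃ n ∈ S, w <:+: substIter σ n [a]}
  have hP : ∀ w ∈ P, ∀ v, v <:+: w → v ∈ P := by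
    rintro w ⟨n, hn, hw⟩ v hv
    exact ⟨n, hn, hv.trans hw⟩
  obtain ⟨y, hy, -⟩ := exists_limit_point hP Set.univ fun N => by
    obtain ⟨K, hK⟩ := Filter.eventually_atTop.1 (ha.eventually_ge_atTop (2 * N + 1))
    obtain ⟨n, hn, hKn⟩ := hS.exists_gt K
    have hlen := hK n hKn.le
    have hN : N < (substIter σ n [a]).length := by omega
    refine ⟨(substIter σ n [a]).take N, (substIter σ n [a])[N], (substIter σ n [a]).drop (N + 1),
      ⟨n, hn, ?_⟩, trivial, ?_, ?_⟩
    · rw [← List.drop_eq_getElem_cons hN, List.take_append_drop]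
    · rw [List.length_take]; omega
    · rw [List.length_drop]; omega
  have hsub : langShift P ⊆ XSub σ := fun z hz s t hst => by
    obtain ⟨n, hn, hw⟩ := hz s t hst
    exact ⟨a, n, hS1 n hn, hw⟩
  have heq := hmin.2 _ hsub ⟨y, hy⟩ (isClosed_langShift P) (shiftT_image_langShift P)
  rw [← heq] at hx
  obtain ⟨w, ⟨n, hn, hw⟩, hxw⟩ := mem_of_mem_langShift hx 0
  exact ⟨n, hn, hw.subset hxw⟩

end Main

end SubstMin

/-- If `(X_σ, T)` is minimal and not a single periodic orbit, then `∼`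
has exactly one equivalence class on `A_{min,l}` (it is nonempty and any two of its
elements are related), and for every `a ∈ A_{min,l}` the least eventual period of
`n ↦ sⁿ({a})` is `1` (the sequence is eventually constant). -/
theorem statement16 {A : Type*} [Fintype A] [TopologicalSpace A] [DiscreteTopology A]
    (σ : A → List A) (hσ : SubstMin.IsSubstitution σ)
    (hmin : SubstMin.IsMinimalSubshift (SubstMin.XSub σ))
    (hnp : ¬ SubstMin.IsSinglePeriodicOrbit (SubstMin.XSub σ)) :
    (SubstMin.minLong σ).Nonempty ∧
    (∀ a ∈ SubstMin.minLong σ, ∀ b ∈ SubstMin.minLong σ, SubstMin.arrow σ a b) ∧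
    (∀ a ∈ SubstMin.minLong σ, ∃ N : ℕ, ∀ n : ℕ, N ≤ n →
      (SubstMin.sMap σ)^[n + 1] {a} = (SubstMin.sMap σ)^[n] {a}) := by
  have hne := hσ.1
  obtain ⟨x, hx, hc⟩ := SubstMin.exists_long_point hσ hmin hnp
  set c := x 0 with hcdef
  have hreach : ∀ a ∈ SubstMin.longLetters σ, SubstMin.arrow σ a c := fun a ha =>
    SubstMin.mem_of_infinite hmin hx ha (Set.Ici_infinite 1) fun _ h => h
  refine ⟨SubstMin.minLong_nonempty hne hσ.2, fun a ha b hb => ?_, fun a ha => ?_⟩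
  · exact SubstMin.arrow_trans (hreach a ha.1) (hb.2 c hc (hreach b hb.1))
  -- `c` occurs in `σⁿ(a)` for all large `n`, hence so does `a`.
  obtain ⟨K, hK⟩ : ∃ K, ∀ n, K ≤ n → c ∈ SubstMin.substIter σ n [a] := by
    by_contra! h
    have hS : {n | 1 ≤ n ∧ c ∉ SubstMin.substIter σ n [a]}.Infinite :=
      Set.infinite_of_not_bddAbove fun ⟨B, hB⟩ => by
        obtain ⟨n, hn, hcn⟩ := h (B + 1)
        have := hB (show n ∈ {n | 1 ≤ n ∧ c ∉ SubstMin.substIter σ n [a]} from ⟨by omega, hcn⟩)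
        omega
    obtain ⟨n, hn, hxn⟩ := SubstMin.mem_of_infinite hmin hx ha.1 hS fun _ h => h.1
    exact hn.2 hxn
  obtain ⟨k, -, hk⟩ := ha.2 c hc (hreach a ha.1)
  have haa : ∀ n, K + k ≤ n → a ∈ SubstMin.substIter σ n [a] := fun n hn => by
    obtain ⟨j, rfl⟩ := Nat.exists_eq_add_of_le' hn
    rw [show j + (K + k) = k + (j + K) by ring]
    exact SubstMin.mem_substIter_add (hK _ (by omega)) hk
  simp only [SubstMin.sMap_iterate hne ha.1]
  -- The letter sets `F m` satisfy `F m ⊆ F (m + n)` for all `n ≥ K + k`, so the sequence is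
  -- constant from `K + k` steps after an index of maximal cardinality.
  let F : ℕ → Set A := fun n => {b | b ∈ SubstMin.longLetters σ ∧ b ∈ SubstMin.substIter σ n [a]}
  have hF : ∀ m n, K + k ≤ n → F m ⊆ F (m + n) := fun m n hn b hb =>
    ⟨hb.1, SubstMin.mem_substIter_add (haa n hn) hb.2⟩
  obtain ⟨_, ⟨m, rfl⟩, hmax⟩ := Set.exists_max_image (Set.range F) Set.ncard
    (Set.toFinite _) (Set.range_nonempty F)
  have hconst : ∀ n, m + (K + k) ≤ n → F n = F m := fun n hn => by
    obtain ⟨j, rfl⟩ := Nat.exists_eq_add_of_le hn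
    rw [add_assoc]
    exact (Set.eq_of_subset_of_ncard_le (hF m _ (by omega)) (hmax _ ⟨_, rfl⟩)
      (Set.toFinite _)).symm
  exact ⟨m + (K + k), fun n hn => (hconst (n + 1) (by omega)).trans (hconst n hn).symm⟩
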